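/- The area-weighted generating function D(q,t) = Σ_π q^{m(π)} t^{n(π)}, where the sum is over all Dyck paths without height restriction, satisfies D(q,t) · Σ_{m≥0} (-t)^m q^{m(m-1)}/(q;q)_m = Σ_{m≥0} (-t)^m q^{m²}/(q;q)_m as an identity of formal power series in the two variables q and t (each 1/(q;q)_m being the inverse of the power series (q;q)_m, which has constant term 1). -/

import Mathlib

/-!
Cutting a nonempty Dyck path at its first return to the axis writes it uniquely as `U l D r` with
`l`, `r` Dyck paths. Raising `l` by one adds its semilength to the area, so
`D(t) = 1 + t D(qt) D(t)` (`Dgf_functional_equation`). Mathlib's equivalence between Dyck words and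
binary trees carries this decomposition, with `node l r` corresponding to `U l D r`.

On the other side, `A(t) = Σ (-t)^m q^{m(m-1)}/(q;q)_m` satisfies `A(qt) = A(t) + t A(q²t)`
(`rescale_denSeries`), and the right-hand side of the theorem is `A(qt)`. Put
`E(t) = D(t) A(t) - A(qt)`. The two functional equations give `E(t) = t (D(qt) E(t) + E(qt))`, so
every coefficient of `E` is determined linearly by the earlier ones, and `E = 0`
(`eq_zero_of_eq_X_mul`).
-/

/-!
Statement 2: The area-weighted generating function `D(q,t) = Σ_π q^{m(π)} t^{n(π)}`, summed
over all Dyck paths, satisfies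
`D(q,t) · Σ_{m≥0} (-t)^m q^{m(m-1)}/(q;q)_m = Σ_{m≥0} (-t)^m q^{m²}/(q;q)_m`
as formal power series in the two variables `q` and `t`.

We represent formal power series in `q` and `t` as `PowerSeries (PowerSeries ℚ)`: power
series in `t` whose coefficients are power series in `q`.  Each `1/(q;q)_m` is the inverse
(in `ℚ⟦q⟧`) of the power series `(q;q)_m`, which has constant term `1`.
-/

open Finset PowerSeries

noncomputable section

/-- The ring of formal power series in the variable `q`. -/
abbrev Rq : Type := PowerSeries ℚ

/-- The series variable `q`. -/
def qv : Rq := PowerSeries.X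

/-- A path is encoded as a list of steps, `true` = step `(1,1)`, `false` = step `(1,-1)`.
`hgt s i` is the height of the vertex reached after the first `i` steps. -/
def hgt (s : List Bool) (i : ℕ) : ℕ := (s.take i).count true - (s.take i).count false

/-- A Dyck path: it ends on the line `y = 0` and never goes below it. -/
def IsDyck (s : List Bool) : Prop :=
  s.count true = s.count false ∧ ∀ i, (s.take i).count false ≤ (s.take i).count true

/-- The area statistic `m(π)`: the sum of the starting heights of all up-steps. -/
def area (s : List Bool) : ℕ :=
  ∑ i ∈ Finset.range s.length, if s.getD i false = true then hgt s i else 0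

/-- The set of all Dyck paths of semilength `n` (no height restriction). -/
def dyckSet (n : ℕ) : Set (List Bool) := {s | s.length = 2 * n ∧ IsDyck s}

/-- `D(q,t) = Σ_π q^{m(π)} t^{n(π)}`: the `t^n`-coefficient is the (finite) sum of
`q^{m(π)}` over all Dyck paths of semilength `n`. -/
def Dgf : PowerSeries Rq :=
  PowerSeries.mk fun n => ∑ᶠ s ∈ dyckSet n, qv ^ area s

/-- The q-Pochhammer symbol `(q;q)_m = ∏_{i=0}^{m-1} (1 - q·q^i)`, a power series in `q`
with constant term `1`. -/
def qPochQQ (m : ℕ) : Rq := ∏ i ∈ Finset.range m, (1 - qv * qv ^ i)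

/-- The sum of the starting heights of the up-steps of a path that starts at height `h`,
computed step by step. -/
def areaFrom : ℕ → List Bool → ℕ
  | _, [] => 0
  | h, true :: s => h + areaFrom (h + 1) s
  | h, false :: s => areaFrom (h - 1) s

/-- The hypothesis keeps the path weakly above the axis, so that no subtraction truncates. -/
lemma sum_height_eq_areaFrom (s : List Bool) (h : ℕ)
    (hs : ∀ i, (s.take i).count false ≤ h + (s.take i).count true) :
    (∑ i ∈ Finset.range s.length, if s.getD i false = true then
      h + (s.take i).count true - (s.take i).count false else 0) = areaFrom h s := by
  induction s generalizing h with
  | nil => simp [areaFrom]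
  | cons b s ih =>
    rw [List.length_cons, Finset.sum_range_succ']
    cases b with
    | true =>
      have hs' : ∀ i, (s.take i).count false ≤ (h + 1) + (s.take i).count true := by
        intro i
        have := hs (i + 1)
        simp at this
        omega
      rw [areaFrom, ← ih _ hs', add_comm]
      congr 1
      refine Finset.sum_congr rfl fun i _ => ?_
      simp [add_comm, add_left_comm]
    | false =>
      -- the first step goes down, so the starting height is positive
      have h1 : 1 ≤ h := by simpa using hs 1
      have hs' : ∀ i, (s.take i).count false ≤ (h - 1) + (s.take i).count true := by
        intro i
        have := hs (i + 1)
        simp at this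
        omega
      rw [areaFrom, ← ih _ hs']
      simp only [List.getD_cons_zero, Bool.false_eq_true, if_false, add_zero]
      refine Finset.sum_congr rfl fun i _ => ?_
      simp only [List.getD_cons_succ, List.take_succ_cons, List.count_cons]
      congr 1
      simp
      omega

lemma area_eq_areaFrom {s : List Bool} (hs : IsDyck s) : area s = areaFrom 0 s := by
  rw [← sum_height_eq_areaFrom s 0 (by simpa using hs.2)]
  simp [area, hgt]

/-- Up-steps of Mathlib's Dyck words become `true`, down-steps become `false`. -/
def stepBool : DyckStep → Bool
  | .U => true
  | .D => false

lemma stepBool_injective : Function.Injective stepBool := by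
  rintro (_ | _) (_ | _) h <;> simp_all [stepBool]

/-- The Dyck path of a binary tree: `nil` gives the empty path and `node l r` gives `U l D r`. -/
def treeWord (t : BinaryTree Unit) : List Bool :=
  (DyckWord.ofTree t).toList.map stepBool

lemma treeWord_nil : treeWord .nil = [] := rfl

lemma treeWord_node (u : Unit) (l r : BinaryTree Unit) :
    treeWord (.node u l r) = true :: (treeWord l ++ false :: treeWord r) := by
  have : ∀ p q : DyckWord, (p + q).toList = p.toList ++ q.toList := fun _ _ => rfl
  simp [treeWord, DyckWord.ofTree, this, DyckWord.nest, stepBool]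

lemma treeWord_injective : Function.Injective treeWord := by
  intro s t h
  exact DyckWord.equivTree.symm.injective
    (DyckWord.ext (List.map_injective_iff.2 stepBool_injective h))

lemma count_map_stepBool (l : List DyckStep) :
    (l.map stepBool).count true = l.count .U ∧ (l.map stepBool).count false = l.count .D :=
  ⟨List.count_map_of_injective l stepBool stepBool_injective .U,
    List.count_map_of_injective l stepBool stepBool_injective .D⟩

lemma isDyck_map_stepBool (l : List DyckStep) :
    IsDyck (l.map stepBool) ↔
      l.count .U = l.count .D ∧ ∀ i, (l.take i).count .D ≤ (l.take i).count .U := by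
  simp only [IsDyck, ← List.map_take, count_map_stepBool]

lemma isDyck_treeWord (t : BinaryTree Unit) : IsDyck (treeWord t) :=
  (isDyck_map_stepBool _).2 ⟨DyckWord.count_U_eq_count_D _, DyckWord.count_D_le_count_U _⟩

lemma length_treeWord (t : BinaryTree Unit) : (treeWord t).length = 2 * t.numNodes := by
  rw [treeWord, List.length_map, ← DyckWord.two_mul_semilength_eq_length,
    ← DyckWord.numNodes_toTree, DyckWord.toTree_ofTree]

lemma exists_treeWord_eq {s : List Bool} (hs : IsDyck s) : ∃ t, treeWord t = s := by
  obtain ⟨l, rfl⟩ : ∃ l : List DyckStep, l.map stepBool = s :=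
    List.map_surjective_iff.2
      (fun b => by cases b; exacts [⟨.D, rfl⟩, ⟨.U, rfl⟩]) s
  rw [isDyck_map_stepBool] at hs
  refine ⟨DyckWord.toTree ⟨l, hs.1, hs.2⟩, ?_⟩
  rw [treeWord, DyckWord.ofTree_toTree]

/-- The area of the Dyck path of a binary tree. -/
def treeArea : BinaryTree Unit → ℕ
  | .nil => 0
  | .node _ l r => treeArea l + l.numNodes + treeArea r

/-- A Dyck path raised to height `h` gains `h` for each of its up-steps. -/
lemma areaFrom_treeWord_append (t : BinaryTree Unit) (h : ℕ) (s : List Bool) :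
    areaFrom h (treeWord t ++ s) = treeArea t + h * t.numNodes + areaFrom h s := by
  induction t generalizing h s with
  | nil => simp [treeWord_nil, treeArea, BinaryTree.numNodes]
  | node u l r ihl ihr =>
    simp only [treeWord_node, List.cons_append, List.append_assoc, areaFrom, ihl, ihr,
      Nat.add_sub_cancel, treeArea, BinaryTree.numNodes]
    ring

lemma area_treeWord (t : BinaryTree Unit) : area (treeWord t) = treeArea t := by
  have := areaFrom_treeWord_append t 0 []
  rw [area_eq_areaFrom (isDyck_treeWord t)]
  simpa [areaFrom] using this

lemma coeff_Dgf (n : ℕ) :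
    coeff n Dgf = ∑ t ∈ BinaryTree.treesOfNumNodesEq n, qv ^ treeArea t := by
  have hset : dyckSet n = Set.image treeWord
      (BinaryTree.treesOfNumNodesEq n : Set (BinaryTree Unit)) := by
    ext s
    simp only [dyckSet, Set.mem_ofPred_eq, Set.mem_image, BinaryTree.coe_treesOfNumNodesEq]
    constructor
    · rintro ⟨hl, hs⟩
      obtain ⟨t, rfl⟩ := exists_treeWord_eq hs
      rw [length_treeWord] at hl
      exact ⟨t, by omega, rfl⟩
    · rintro ⟨t, rfl, rfl⟩
      exact ⟨length_treeWord t, isDyck_treeWord t⟩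
  rw [Dgf, coeff_mk, hset, finsum_mem_image treeWord_injective.injOn, finsum_mem_coe_finset]
  simp only [area_treeWord]

lemma coeff_Dgf_succ (n : ℕ) :
    coeff (n + 1) Dgf =
      ∑ ij ∈ antidiagonal n, qv ^ ij.1 * coeff ij.1 Dgf * coeff ij.2 Dgf := by
  rw [coeff_Dgf, BinaryTree.treesOfNumNodesEq_succ, Finset.sum_biUnion]
  · refine Finset.sum_congr rfl fun ij _ => ?_
    rw [Finset.sum_map, Finset.sum_product, coeff_Dgf, coeff_Dgf, mul_assoc, Finset.sum_mul_sum,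
      Finset.mul_sum]
    refine Finset.sum_congr rfl fun l hl => ?_
    rw [Finset.mul_sum]
    refine Finset.sum_congr rfl fun r _ => ?_
    rw [BinaryTree.mem_treesOfNumNodesEq] at hl
    change qv ^ (treeArea l + l.numNodes + treeArea r) = _
    rw [hl]
    ring
  · intro i _ j _ hij
    refine Finset.disjoint_left.2 fun t hi hj => hij ?_
    obtain ⟨⟨l, r⟩, hlr, rfl⟩ := Finset.mem_map.1 hi
    obtain ⟨⟨l', r'⟩, hlr', h⟩ := Finset.mem_map.1 hj
    obtain ⟨-, rfl, rfl⟩ := BinaryTree.node.inj h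
    rw [Finset.mem_product, BinaryTree.mem_treesOfNumNodesEq,
      BinaryTree.mem_treesOfNumNodesEq] at hlr hlr'
    exact Prod.ext (hlr.1.symm.trans hlr'.1) (hlr.2.symm.trans hlr'.2)

/-- The first-return decomposition `D(t) = 1 + t D(qt) D(t)`. -/
lemma Dgf_functional_equation : Dgf = 1 + X * (rescale qv Dgf * Dgf) := by
  ext1 n
  cases n with
  | zero => simp [coeff_Dgf, treeArea]
  | succ n =>
    rw [coeff_Dgf_succ, map_add, coeff_succ_X_mul, coeff_mul, coeff_one, if_neg n.succ_ne_zero,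
      zero_add]
    simp only [coeff_rescale]

lemma constantCoeff_qPochQQ (m : ℕ) : PowerSeries.constantCoeff (qPochQQ m) = 1 := by
  simp [qPochQQ, qv]

lemma qPochQQ_inv_succ (m : ℕ) :
    (1 - qv * qv ^ m) * (qPochQQ (m + 1))⁻¹ = (qPochQQ m)⁻¹ := by
  have hm : qPochQQ m * (qPochQQ m)⁻¹ = 1 :=
    PowerSeries.mul_inv_cancel _ (by simp [constantCoeff_qPochQQ])
  have hm1 : qPochQQ (m + 1) * (qPochQQ (m + 1))⁻¹ = 1 :=
    PowerSeries.mul_inv_cancel _ (by simp [constantCoeff_qPochQQ])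
  rw [show qPochQQ (m + 1) = qPochQQ m * (1 - qv * qv ^ m) from Finset.prod_range_succ _ _] at *
  linear_combination (qPochQQ m)⁻¹ * hm1 -
    (1 - qv * qv ^ m) * (qPochQQ m * (1 - qv * qv ^ m))⁻¹ * hm

/-- The denominator series `A(t) = Σ (-t)^m q^{m(m-1)}/(q;q)_m`. -/
def denSeries : PowerSeries Rq :=
  PowerSeries.mk fun m : ℕ => (-1 : Rq) ^ m * qv ^ (m * (m - 1)) * (qPochQQ m)⁻¹

/-- The numerator series is `A(qt)`. -/
lemma rescale_denSeries_eq_mk : rescale qv denSeries =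
    PowerSeries.mk fun m : ℕ => (-1 : Rq) ^ m * qv ^ (m * m) * (qPochQQ m)⁻¹ := by
  rw [denSeries, rescale_mk]
  congr 1
  funext m
  have : m * m = m + m * (m - 1) := by cases m <;> simp; ring
  rw [this, pow_add]
  ring

/-- The functional equation `A(qt) = A(t) + t A(q²t)`. -/
lemma rescale_denSeries :
    rescale qv denSeries = denSeries + X * rescale qv (rescale qv denSeries) := by
  ext1 n
  cases n with
  | zero => simp
  | succ n =>
    rw [map_add, coeff_succ_X_mul, coeff_rescale, coeff_rescale, coeff_rescale, denSeries,
      coeff_mk, coeff_mk, ← qPochQQ_inv_succ n]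
    have : (n + 1) * (n + 1 - 1) = n + n + n * (n - 1) := by cases n <;> simp; ring
    rw [this]
    ring

/-- `E(t) = t (F(t) E(t) + E(at))` forces `E = 0`: the `t^n`-coefficient of the right-hand side
involves only coefficients of `E` of index below `n`. -/
lemma eq_zero_of_eq_X_mul {R : Type*} [CommRing R] (a : R) (E F : PowerSeries R)
    (h : E = X * (F * E + rescale a E)) : E = 0 := by
  ext1 n
  induction n using Nat.strong_induction_on with
  | _ n ih =>
    rw [h]
    cases n with
    | zero => simp
    | succ n =>
      rw [coeff_succ_X_mul, map_add, coeff_rescale, ih n n.lt_succ_self, coeff_mul,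
        Finset.sum_eq_zero]
      · simp
      · intro ij hij
        rw [Finset.HasAntidiagonal.mem_antidiagonal] at hij
        rw [ih ij.2 (by omega)]
        simp

/-- `D(q,t) · Σ_{m≥0} (-t)^m q^{m(m-1)}/(q;q)_m = Σ_{m≥0} (-t)^m q^{m²}/(q;q)_m`
as formal power series in `q` and `t`. -/
theorem dyck_area_generating_function :
    Dgf * PowerSeries.mk (fun m : ℕ => (-1 : Rq) ^ m * qv ^ (m * (m - 1)) * (qPochQQ m)⁻¹)
      = PowerSeries.mk (fun m : ℕ => (-1 : Rq) ^ m * qv ^ (m * m) * (qPochQQ m)⁻¹) := by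
  rw [← rescale_denSeries_eq_mk, ← denSeries, ← sub_eq_zero]
  apply eq_zero_of_eq_X_mul qv _ (rescale qv Dgf)
  rw [map_sub, map_mul]
  linear_combination denSeries * Dgf_functional_equation - rescale_denSeries

end
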